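/- arXiv:2407.04462 — 2 statements merged into one kernel-verified Lean document; each statement's English description precedes it below -/
import Mathlib

section
/- Let Σ = {a_1 < a_2 < ⋯ < a_k} be an ordered alphabet with k ≥ 1, and let Ψ: Σ* → M_{k+1}(ℤ) be the Parikh matrix mapping. Then for every word w over Σ, the matrix Ψ(w) = (m_{ij}) satisfies: m_{ij} = 0 for all 1 ≤ j < i ≤ k+1; m_{ii} = 1 for all 1 ≤ i ≤ k+1; and m_{i,j+1} = C(w, a_i a_{i+1} ⋯ a_j) for all 1 ≤ i ≤ j ≤ k. -/
/-- Number of occurrences of the generalized subsequence with factor list `Q` in the word `w`.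
The empty sequence of factors has exactly one occurrence in every word. -/
def gsCount {α : Type*} [DecidableEq α] : List (List α) → List α → ℕ
  | [], _ => 1
  | q :: Q, w =>
      ∑ i ∈ Finset.range (w.length + 1 - q.length),
        if (w.drop i).take q.length = q then gsCount Q (w.drop (i + q.length)) else 0

/-- Scattered-subword count `C(w, u)`: the number of occurrences of `u` as a
scattered subword (subsequence) of `w`. -/
def sCount {α : Type*} [DecidableEq α] : List α → List α → ℕ
  | _, [] => 1
  | [], _ :: _ => 0
  | a :: w, b :: u => sCount w (b :: u) + (if a = b then sCount w u else 0)

theorem filter_interval_cons {k : ℕ} (i j : Fin k) (h : i ≤ j) :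
    ((List.finRange k).filter fun t => i ≤ t ∧ t ≤ j) =
      i :: ((List.finRange k).filter fun t => i < t ∧ t ≤ j) := by
  have hs : (List.finRange k).Pairwise (· < ·) := List.pairwise_lt_finRange k
  have h1 : ((List.finRange k).filter fun t => i ≤ t ∧ t ≤ j).Pairwise (· < ·) := hs.filter _
  have h2 : (i :: ((List.finRange k).filter fun t => i < t ∧ t ≤ j)).Pairwise (· < ·) := by
    refine List.pairwise_cons.2 ⟨?_, hs.filter _⟩
    intro t ht
    simp at ht
    exact ht.1
  refine List.Perm.eq_of_pairwise (le := (· < ·)) ?_ h1 h2 ?_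
  · intro a b _ _ hab hba
    exact absurd hab (lt_asymm hba)
  · refine (List.perm_ext_iff_of_nodup (h1.imp fun h => ne_of_lt h)
      (h2.imp fun h => ne_of_lt h)).2 ?_
    intro t
    simp only [List.mem_filter, List.mem_finRange, true_and, List.mem_cons, decide_eq_true_eq]
    constructor
    · rintro ⟨a, b⟩
      rcases a.eq_or_lt with a | a
      · exact Or.inl a.symm
      · exact Or.inr ⟨a, b⟩
    · rintro (a | ⟨a, b⟩)
      · subst a
        exact ⟨le_rfl, h⟩
      · exact ⟨a.le, b⟩

theorem stmt8 (k : ℕ) (hk : 1 ≤ k)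
    (Ψ : List (Fin k) → Matrix (Fin (k + 1)) (Fin (k + 1)) ℤ)
    (hmul : ∀ w1 w2 : List (Fin k), Ψ (w1 ++ w2) = Ψ w1 * Ψ w2)
    (hone : Ψ [] = 1)
    (hletter : ∀ q : Fin k, Ψ [q] = 1 + Matrix.single q.castSucc q.succ 1)
    (w : List (Fin k)) :
    (∀ i j : Fin (k + 1), j < i → Ψ w i j = 0) ∧
    (∀ i : Fin (k + 1), Ψ w i i = 1) ∧
    (∀ i j : Fin k, i ≤ j →
      Ψ w i.castSucc j.succ =
        (sCount w ((List.finRange k).filter fun t => i ≤ t ∧ t ≤ j) : ℤ)) := by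
  have step : ∀ (a : Fin k) (w : List (Fin k)) (i j : Fin (k + 1)),
      Ψ (a :: w) i j = Ψ w i j + if a.castSucc = i then Ψ w a.succ j else 0 := by
    intro a w i j
    have h := hmul [a] w
    rw [List.singleton_append] at h
    rw [h, hletter, add_mul, one_mul, Matrix.add_apply]
    congr 1
    split_ifs with hi
    · subst hi
      simp
    · exact Matrix.single_mul_apply_of_ne _ _ _ _ _ (Ne.symm hi) _
  induction w with
  | nil =>
    rw [hone]
    refine ⟨fun i j h => Matrix.one_apply_ne h.ne', fun i => Matrix.one_apply_eq i, ?_⟩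
    intro i j h
    rw [filter_interval_cons i j h, Matrix.one_apply_ne]
    · simp [sCount]
    · exact (Fin.castSucc_lt_succ_iff.2 h).ne
  | cons a w ih =>
    obtain ⟨ih1, ih2, ih3⟩ := ih
    refine ⟨?_, ?_, ?_⟩
    · intro i j h
      rw [step, ih1 i j h]
      split_ifs with hi
      · subst hi
        rw [ih1 _ _ (h.trans a.castSucc_lt_succ), add_zero]
      · rfl
    · intro i
      rw [step, ih2 i]
      split_ifs with hi
      · subst hi
        rw [ih1 _ _ a.castSucc_lt_succ, add_zero]
      · rfl
    · intro i j h
      have h3 := ih3 i j h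
      rw [step, h3, filter_interval_cons i j h]
      simp only [sCount, Fin.castSucc_inj, Nat.cast_add]
      congr 1
      split_ifs with hi
      · subst hi
        rcases h.eq_or_lt with e | l
        · subst e
          have hn : ((List.finRange k).filter fun t => a < t ∧ t ≤ a) = [] := by
            refine List.filter_eq_nil_iff.2 ?_
            intro t _ ht
            simp only [decide_eq_true_eq] at ht
            exact absurd ht.1 (not_lt.2 ht.2)
          rw [hn, ih2]
          simp [sCount]
        · have hb : a.val + 1 < k := by
            have := j.isLt
            have : a.val < j.val := l
            omega
          have h4 := ih3 ⟨a.val + 1, hb⟩ j l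
          have e1 : (⟨a.val + 1, hb⟩ : Fin k).castSucc = a.succ := rfl
          rw [e1] at h4
          exact h4
      · rfl
end

section
/- Let Σ = {a_1 < a_2 < ⋯ < a_k} be an ordered alphabet and let Ψ: Σ* → M_{k+1}(ℤ) be the Parikh matrix mapping. Then for every word w over Σ, every minor of Ψ(w) — the determinant of any square submatrix obtained by selecting equally many rows and columns of Ψ(w) — is a nonnegative integer. -/
theorem tn_step (k : ℕ) (A : Matrix (Fin (k + 1)) (Fin (k + 1)) ℤ) (q : Fin k)
    (m : ℕ) (c : Fin m → Fin (k + 1))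
    (hA : ∀ r : Fin m → Fin (k + 1), StrictMono r → 0 ≤ (A.submatrix r c).det)
    (r : Fin m → Fin (k + 1)) (hr : StrictMono r) :
    0 ≤ (((1 + Matrix.single q.castSucc q.succ 1) * A).submatrix r c).det := by
  have hent : ∀ i j, ((1 + Matrix.single q.castSucc q.succ (1 : ℤ)) * A) i j =
      A i j + if i = q.castSucc then A q.succ j else 0 := by
    intro i j
    rw [add_mul, one_mul, Matrix.add_apply]
    congr 1
    split_ifs with h
    · subst h; simp
    · exact (Matrix.single_mul_apply_of_ne _ _ _ _ _ h _).trans rfl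
  by_cases hq : ∃ i, r i = q.castSucc
  · obtain ⟨i, hi⟩ := hq
    have h1 : ((1 + Matrix.single q.castSucc q.succ (1 : ℤ)) * A).submatrix r c =
        (A.submatrix r c).updateRow i
          ((fun j => A q.castSucc (c j)) + (fun j => A q.succ (c j))) := by
      ext a b
      rw [Matrix.submatrix_apply, hent, Matrix.updateRow_apply]
      by_cases ha : a = i
      · subst ha; simp [hi]
      · have : r a ≠ q.castSucc := fun h => ha (hr.injective (h.trans hi.symm))
        simp [ha, this]
    have h2 : (A.submatrix r c).updateRow i (fun j => A q.castSucc (c j)) =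
        A.submatrix r c := by
      ext a b
      rw [Matrix.updateRow_apply]
      split_ifs with ha
      · subst ha; simp [hi]
      · rfl
    have h3 : (A.submatrix r c).updateRow i (fun j => A q.succ (c j)) =
        A.submatrix (Function.update r i q.succ) c := by
      ext a b
      rw [Matrix.updateRow_apply]
      by_cases ha : a = i
      · subst ha; simp
      · simp [ha]
    rw [h1, Matrix.det_updateRow_add, h2, h3]
    refine add_nonneg (hA r hr) ?_
    by_cases hinj : Function.Injective (Function.update r i q.succ)
    · refine hA _ (Monotone.strictMono_of_injective ?_ hinj)
      intro a b hab
      rcases hab.eq_or_lt with rfl | hlt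
      · exact le_rfl
      have hl := hr hlt
      by_cases ha : a = i
      · subst ha
        rw [Function.update_self, Function.update_of_ne hlt.ne']
        rw [hi] at hl
        simpa [Fin.le_def, Fin.lt_def, Nat.succ_le_iff] using hl
      · by_cases hb : b = i
        · subst hb
          rw [Function.update_self, Function.update_of_ne ha]
          rw [hi] at hl
          exact hl.le.trans q.castSucc_lt_succ.le
        · rw [Function.update_of_ne ha, Function.update_of_ne hb]
          exact hl.le
    · simp only [Function.Injective, not_forall] at hinj
      obtain ⟨a, b, hab, hne⟩ := hinj
      refine (Matrix.det_zero_of_row_eq hne ?_).ge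
      ext j
      simp [Matrix.submatrix_apply, hab]
  · push Not at hq
    have h1 : ((1 + Matrix.single q.castSucc q.succ (1 : ℤ)) * A).submatrix r c =
        A.submatrix r c := by
      ext a b
      rw [Matrix.submatrix_apply, hent]
      simp [hq a]
    rw [h1]
    exact hA r hr

theorem tn_one (n m : ℕ) (r c : Fin m → Fin n) (hr : StrictMono r) (hc : StrictMono c) :
    0 ≤ ((1 : Matrix (Fin n) (Fin n) ℤ).submatrix r c).det := by
  by_cases h : ∀ i, ∃ j, c j = r i
  · have hrc : r = c := by
      apply (hr.range_inj hc).1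
      apply Set.eq_of_subset_of_ncard_le
      · rintro _ ⟨i, rfl⟩; exact h i
      · rw [← Set.image_univ, ← Set.image_univ, Set.ncard_image_of_injective _ hr.injective,
          Set.ncard_image_of_injective _ hc.injective]
      · exact Set.toFinite _
    subst hrc
    rw [Matrix.submatrix_one _ hr.injective]
    simp
  · push Not at h
    obtain ⟨i, hi⟩ := h
    rw [Matrix.det_eq_zero_of_row_eq_zero i]
    intro j
    exact Matrix.one_apply_ne (hi j).symm


theorem stmt9 (k : ℕ)
    (Ψ : List (Fin k) → Matrix (Fin (k + 1)) (Fin (k + 1)) ℤ)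
    (hmul : ∀ w1 w2 : List (Fin k), Ψ (w1 ++ w2) = Ψ w1 * Ψ w2)
    (hone : Ψ [] = 1)
    (hletter : ∀ q : Fin k, Ψ [q] = 1 + Matrix.single q.castSucc q.succ 1)
    (w : List (Fin k))
    (m : ℕ) (r c : Fin m → Fin (k + 1))
    (hr : StrictMono r) (hc : StrictMono c) :
    0 ≤ ((Ψ w).submatrix r c).det := by
  induction w generalizing r with
  | nil => rw [hone]; exact tn_one _ _ r c hr hc
  | cons q w ih =>
    have h : Ψ (q :: w) = Ψ [q] * Ψ w := hmul [q] w
    rw [h, hletter]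
    exact tn_step k (Ψ w) q m c (fun r hr => ih r hr) r hr
end
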